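/- Let φ₁ : ℤ⁵ → ℤ² be the group homomorphism determined on the standard generators a, b, c, d, μ of ℤ⁵ by φ₁(a) = 0, φ₁(b) = 0, φ₁(c) = (1,0), φ₁(d) = (0,1), φ₁(μ) = 0, and let φ₂ : ℤ⁵ → ℤ² be determined by φ₂(a) = 0, φ₂(b) = (0,1), φ₂(c) = (1,0), φ₂(d) = 0, φ₂(μ) = 0. Then the pushout of φ₁ and φ₂ in the category of groups is isomorphic to ℤ. -/

import Mathlib

theorem hom_ext_ZZ {K : Type*} [Group K] (f g : Multiplicative (ℤ × ℤ) →* K)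
    (h1 : f (Multiplicative.ofAdd (1, 0)) = g (Multiplicative.ofAdd (1, 0)))
    (h2 : f (Multiplicative.ofAdd (0, 1)) = g (Multiplicative.ofAdd (0, 1))) : f = g := by
  refine MonoidHom.ext fun x => ?_
  have hx : x = (Multiplicative.ofAdd ((1 : ℤ), (0 : ℤ))) ^ (x.toAdd.1) *
      (Multiplicative.ofAdd ((0 : ℤ), (1 : ℤ))) ^ (x.toAdd.2) := by
    apply Multiplicative.toAdd.injective
    ext <;> simp
  rw [hx, map_mul, map_mul, map_zpow, map_zpow, map_zpow, map_zpow, h1, h2]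

theorem hom_ext_Z5 {K : Type*} [CommGroup K] (f g : Multiplicative (Fin 5 → ℤ) →* K)
    (h : ∀ i, f (Multiplicative.ofAdd (Pi.single i 1)) =
      g (Multiplicative.ofAdd (Pi.single i 1))) : f = g := by
  refine MonoidHom.ext fun x => ?_
  have hx : x = ∏ i, (Multiplicative.ofAdd (Pi.single i (1 : ℤ) : Fin 5 → ℤ)) ^ (x.toAdd i) := by
    apply Multiplicative.toAdd.injective
    rw [toAdd_prod]
    ext j
    simp [Finset.sum_apply, Pi.single_apply]
  rw [hx, map_prod, map_prod]
  simp only [map_zpow, h]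

/-- Let `φ₁ : ℤ⁵ → ℤ²` be the group homomorphism determined on the standard
generators `a, b, c, d, μ` of `ℤ⁵` by `φ₁ a = 0`, `φ₁ b = 0`, `φ₁ c = (1,0)`, `φ₁ d = (0,1)`,
`φ₁ μ = 0`, and let `φ₂ : ℤ⁵ → ℤ²` be determined by `φ₂ a = 0`, `φ₂ b = (0,1)`,
`φ₂ c = (1,0)`, `φ₂ d = 0`, `φ₂ μ = 0`.  Then the pushout of `φ₁` and `φ₂` in the category
of groups is isomorphic to `ℤ`. -/
theorem pushout_of_gluing_psi'_is_int
    (φ₁ φ₂ : Multiplicative (Fin 5 → ℤ) →* Multiplicative (ℤ × ℤ))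
    (h₁a : φ₁ (Multiplicative.ofAdd (Pi.single 0 1)) = 1)
    (h₁b : φ₁ (Multiplicative.ofAdd (Pi.single 1 1)) = 1)
    (h₁c : φ₁ (Multiplicative.ofAdd (Pi.single 2 1)) = Multiplicative.ofAdd (1, 0))
    (h₁d : φ₁ (Multiplicative.ofAdd (Pi.single 3 1)) = Multiplicative.ofAdd (0, 1))
    (h₁μ : φ₁ (Multiplicative.ofAdd (Pi.single 4 1)) = 1)
    (h₂a : φ₂ (Multiplicative.ofAdd (Pi.single 0 1)) = 1)
    (h₂b : φ₂ (Multiplicative.ofAdd (Pi.single 1 1)) = Multiplicative.ofAdd (0, 1))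
    (h₂c : φ₂ (Multiplicative.ofAdd (Pi.single 2 1)) = Multiplicative.ofAdd (1, 0))
    (h₂d : φ₂ (Multiplicative.ofAdd (Pi.single 3 1)) = 1)
    (h₂μ : φ₂ (Multiplicative.ofAdd (Pi.single 4 1)) = 1) :
    Nonempty (Monoid.PushoutI (fun b : Bool => if b then φ₁ else φ₂) ≃* Multiplicative ℤ) := by
  classical
  let φ : ∀ _ : Bool, Multiplicative (Fin 5 → ℤ) →* Multiplicative (ℤ × ℤ) :=
    fun b => if b then φ₁ else φ₂
  change Nonempty (Monoid.PushoutI φ ≃* Multiplicative ℤ)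
  let p : Multiplicative (ℤ × ℤ) →* Multiplicative ℤ :=
    AddMonoidHom.toMultiplicative (AddMonoidHom.fst ℤ ℤ)
  have p1 : p (Multiplicative.ofAdd (1, 0)) = Multiplicative.ofAdd 1 := rfl
  have p2 : p (Multiplicative.ofAdd (0, 1)) = 1 := rfl
  have hp : p.comp φ₂ = p.comp φ₁ := by
    apply hom_ext_Z5
    intro i
    fin_cases i <;> simp [*]
  let F : Monoid.PushoutI φ →* Multiplicative ℤ :=
    Monoid.PushoutI.lift (fun _ => p) (p.comp φ₁) (by
      intro b
      cases b
      · exact hp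
      · rfl)
  let T : Monoid.PushoutI φ := Monoid.PushoutI.base φ (Multiplicative.ofAdd (Pi.single 2 1))
  let G : Multiplicative ℤ →* Monoid.PushoutI φ := zpowersHom _ T
  have hG1 : G (Multiplicative.ofAdd 1) = T := by simp [G]
  have ht (x) : Monoid.PushoutI.of (φ := φ) true (φ₁ x) = Monoid.PushoutI.base φ x :=
    Monoid.PushoutI.of_apply_eq_base φ true x
  have hf (x) : Monoid.PushoutI.of (φ := φ) false (φ₂ x) = Monoid.PushoutI.base φ x :=
    Monoid.PushoutI.of_apply_eq_base φ false x
  have hof (b : Bool) : G.comp p = Monoid.PushoutI.of (φ := φ) b := by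
    apply hom_ext_ZZ
    · rw [MonoidHom.comp_apply, p1, hG1]
      cases b
      · rw [← h₂c, hf]
      · rw [← h₁c, ht]
    · rw [MonoidHom.comp_apply, p2, map_one]
      cases b
      · rw [← h₂b, hf, ← ht, h₁b, map_one]
      · rw [← h₁d, ht, ← hf, h₂d, map_one]
  have hFof (b : Bool) (x) : F (Monoid.PushoutI.of b x) = p x :=
    Monoid.PushoutI.lift_of _ _ _ _
  refine ⟨MonoidHom.toMulEquiv F G ?_ ?_⟩
  · apply Monoid.PushoutI.hom_ext_nonempty
    intro b
    refine MonoidHom.ext fun x => ?_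
    rw [MonoidHom.comp_apply, MonoidHom.comp_apply, hFof, ← MonoidHom.comp_apply, hof]
    rfl
  · apply MonoidHom.ext_mint
    rw [MonoidHom.comp_apply, hG1]
    change F (Monoid.PushoutI.base φ _) = _
    rw [← ht, hFof, h₁c]
    rfl
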